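/- Let 𝒜 be a unital C*-algebra, 𝒮 ⊆ 𝒜 an operator system, and φ: 𝒮 → M_n(ℂ) a linear map. Then φ is decomposable if and only if its dual functional s_φ: M_n(𝒮) → ℂ satisfies s_φ(S) ≥ 0 for every S ∈ J_n(𝒮). -/

import Mathlib

/-!
Nonnegativity of a functional on the positive matrices over `S` is complete positivity of the map
it is dual to, because `⟨[ψ(sₖₗ)] v, v⟩ = s_ψ(v⋆ s v)` for a scalar matrix `v`, read on the left as
a vector; after transposing, the matrices with positive transpose correspond to co-cp maps in the
same way. So `φ` is decomposable iff `s_φ` is a sum of two functionals, each nonnegative on one of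
two cones whose intersection is `Jₙ(S)`.

Any functional `f` nonnegative on `Jₙ(S)` splits in this way. The unit is an order unit for both
cones in the real space `E` of self-adjoint matrices over `S`, so the Riesz extension theorem
extends `f`, placed on the diagonal of `E × E`, to a functional nonnegative on the product of the
cones. Its two components extend complex-linearly, as `E ∩ iE = 0`.
-/

open scoped ComplexOrder
open Matrix

/-- An element of a star ring is *positive* if it equals `star b * b` for some `b`;
in a (matrix algebra over a) C*-algebra this is the usual notion of positivity. -/
def IsPosElem {R : Type*} [Ring R] [StarRing R] (x : R) : Prop :=
  ∃ b : R, x = star b * b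

variable {A : Type*} [NormedRing A] [StarRing A] [CStarRing A]
  [CompleteSpace A] [NormedAlgebra ℂ A] [StarModule ℂ A]

/-- The canonical image in `Mₘ(𝒜)` of a matrix with entries in the operator system `S`. -/
def matCoe {S : Submodule ℂ A} {m : ℕ} (s : Matrix (Fin m) (Fin m) S) :
    Matrix (Fin m) (Fin m) A :=
  Matrix.of fun j k => (s j k : A)

/-- `J_m(S)`: matrices over `S` which are positive in `Mₘ(𝒜)` together with their
partial transpose. -/
def memJ {S : Submodule ℂ A} {m : ℕ} (s : Matrix (Fin m) (Fin m) S) : Prop :=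
  IsPosElem (matCoe s) ∧ IsPosElem (matCoe s)ᵀ

/-- A map `φ : S → Mₙ(ℂ)` is positive if it sends positive elements of `𝒜` lying in `S`
to positive semidefinite matrices. -/
def IsPosMap {S : Submodule ℂ A} {n : ℕ}
    (φ : S →ₗ[ℂ] Matrix (Fin n) (Fin n) ℂ) : Prop :=
  ∀ s : S, IsPosElem (s : A) → IsPosElem (φ s)

/-- Complete positivity of `φ : S → Mₙ(ℂ)`: every positive matrix over `S` is sent,
entrywise, to a positive element of `Mₘ(Mₙ(ℂ))`. -/
def IsCPMap {S : Submodule ℂ A} {n : ℕ}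
    (φ : S →ₗ[ℂ] Matrix (Fin n) (Fin n) ℂ) : Prop :=
  ∀ (m : ℕ) (s : Matrix (Fin m) (Fin m) S),
    IsPosElem (matCoe s) → IsPosElem (s.map ⇑φ)

/-- `φ` is co-completely positive if `transpose ∘ φ` is completely positive. -/
def IsCoCPMap {S : Submodule ℂ A} {n : ℕ}
    (φ : S →ₗ[ℂ] Matrix (Fin n) (Fin n) ℂ) : Prop :=
  ∀ (m : ℕ) (s : Matrix (Fin m) (Fin m) S),
    IsPosElem (matCoe s) → IsPosElem (s.map fun a => (φ a)ᵀ)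

/-- `φ` is decomposable if it is the sum of a completely positive and a
co-completely positive map. -/
noncomputable def IsDecomposable {S : Submodule ℂ A} {n : ℕ}
    (φ : S →ₗ[ℂ] Matrix (Fin n) (Fin n) ℂ) : Prop :=
  ∃ ψ η : S →ₗ[ℂ] Matrix (Fin n) (Fin n) ℂ,
    IsCPMap ψ ∧ IsCoCPMap η ∧ φ = ψ + η

/-- The dual functional `s_φ` on `Mₙ(S)`, `s_φ([x_{ij}]) = ∑_{i,j} (φ(x_{ij}))_{ij}`. -/
noncomputable def dualFunc {S : Submodule ℂ A} {n : ℕ}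
    (φ : S →ₗ[ℂ] Matrix (Fin n) (Fin n) ℂ)
    (x : Matrix (Fin n) (Fin n) S) : ℂ :=
  ∑ i, ∑ j, φ (x i j) i j

/-- The cone `S⁺ ⊗ Mₙ(ℂ)⁺` inside `Mₙ(𝒜)`: finite sums `∑ sₗ ⊗ xₗ` with `sₗ ∈ S`
positive in `𝒜` and `xₗ` positive semidefinite. -/
def posCone (S : Submodule ℂ A) (n : ℕ) : Set (Matrix (Fin n) (Fin n) A) :=
  { T | ∃ (k : ℕ) (s : Fin k → A) (x : Fin k → Matrix (Fin n) (Fin n) ℂ),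
      (∀ l, s l ∈ S ∧ IsPosElem (s l)) ∧ (∀ l, IsPosElem (x l)) ∧
      T = ∑ l, Matrix.of fun p q => x l p q • s l }

open Filter

section SplittingFunctionals

theorem exists_add_eq_of_nonneg_inter {E : Type*} [AddCommGroup E] [Module ℝ E]
    (C₁ C₂ : PointedCone ℝ E) (hC : ∀ y, ∃ c₁ ∈ C₁, ∃ c₂ ∈ C₂, c₁ - c₂ = y)
    (f : E →ₗ[ℝ] ℝ) (hf : ∀ x ∈ C₁, x ∈ C₂ → 0 ≤ f x) :
    ∃ g₁ g₂ : E →ₗ[ℝ] ℝ, g₁ + g₂ = f ∧ (∀ x ∈ C₁, 0 ≤ g₁ x) ∧ ∀ x ∈ C₂, 0 ≤ g₂ x := by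
  let diag : E →ₗ[ℝ] E × E := LinearMap.id.prod LinearMap.id
  let fDiag : E × E →ₗ.[ℝ] ℝ :=
    { domain := LinearMap.range diag
      toFun := f ∘ₗ LinearMap.fst ℝ E E ∘ₗ Submodule.subtype _ }
  have fDiag_nonneg : ∀ z : fDiag.domain, (z : E × E) ∈ C₁.prod C₂ → 0 ≤ fDiag z := by
    rintro ⟨_, x, rfl⟩ ⟨hx₁, hx₂⟩
    exact hf x hx₁ hx₂
  have diag_add_cone : ∀ y, ∃ z : fDiag.domain, (z : E × E) + y ∈ C₁.prod C₂ := by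
    rintro ⟨y₁, y₂⟩
    obtain ⟨c₁, hc₁, c₂, hc₂, hc⟩ := hC (y₁ - y₂)
    have hc₂' : c₁ - y₁ + y₂ = c₂ := by
      rw [sub_add, ← hc, sub_sub_cancel]
    exact ⟨⟨_, c₁ - y₁, rfl⟩, by simpa [diag] using hc₁, by simpa [diag, hc₂'] using hc₂⟩
  obtain ⟨g, hg_diag, hg_nonneg⟩ := riesz_extension (C₁.prod C₂) fDiag fDiag_nonneg diag_add_cone
  refine ⟨g ∘ₗ LinearMap.inl ℝ E E, g ∘ₗ LinearMap.inr ℝ E E, ?_,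
    fun x hx => hg_nonneg _ ⟨hx, C₂.zero_mem⟩, fun x hx => hg_nonneg _ ⟨C₁.zero_mem, hx⟩⟩
  ext x
  have hx : g (x, x) = f x := hg_diag ⟨_, x, rfl⟩
  simpa [← map_add] using hx

variable {F : Type*} [AddCommGroup F] [Module ℂ F]

theorem exists_complexLinear_extension (E : Submodule ℝ F)
    (hE : ∀ x ∈ E, Complex.I • x ∈ E → x = 0) (h : E →ₗ[ℝ] ℝ) :
    ∃ g : F →ₗ[ℂ] ℂ, ∀ x : E, g x = h x := by
  let mulI : F →ₗ[ℝ] F := (LinearMap.lsmul ℂ F Complex.I).restrictScalars ℝ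
  have disjoint_iE : Disjoint E (E.map mulI) := by
    rw [Submodule.disjoint_def]
    rintro _ hIx ⟨x, hx, rfl⟩
    simp [hE x hx hIx]
  obtain ⟨E', iE_le, hEE'⟩ := disjoint_iE.symm.exists_isCompl
  refine ⟨Module.Dual.extendRCLike (𝕜 := ℂ) (h ∘ₗ E.projectionOnto E' hEE'.symm), fun x => ?_⟩
  have hIx : E.projectionOnto E' hEE'.symm (Complex.I • (x : F)) = 0 :=
    (Submodule.projectionOnto_apply_eq_zero_iff hEE'.symm).2 (iE_le (Submodule.mem_map_of_mem x.2))
  simp [Module.Dual.extendRCLike_apply, hIx]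

theorem exists_add_eq_of_nonneg_inter_complex (E : Submodule ℝ F)
    (hE : ∀ x ∈ E, Complex.I • x ∈ E → x = 0) (C₁ C₂ : PointedCone ℝ E) (e : E)
    (he₁ : ∀ x, ∀ᶠ r : ℝ in atTop, r • e + x ∈ C₁)
    (he₂ : ∀ x, ∀ᶠ r : ℝ in atTop, r • e + x ∈ C₂)
    (f : F →ₗ[ℂ] ℂ) (hf : ∀ x ∈ C₁, x ∈ C₂ → 0 ≤ f x) :
    ∃ g₁ g₂ : F →ₗ[ℂ] ℂ, g₁ + g₂ = f ∧ (∀ x ∈ C₁, 0 ≤ g₁ x) ∧ ∀ x ∈ C₂, 0 ≤ g₂ x := by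
  have mem_inter : ∀ x, ∀ᶠ r : ℝ in atTop, r • e + x ∈ C₁ ∧ r • e + x ∈ C₂ := fun x =>
    (he₁ x).and (he₂ x)
  let fRe : E →ₗ[ℝ] ℝ := Complex.reLm ∘ₗ f.restrictScalars ℝ ∘ₗ E.subtype
  -- The order unit moves every `x` into both cones, where `f` is real.
  have f_real : ∀ x : E, f x = fRe x := by
    intro x
    obtain ⟨r, hx, h0⟩ := ((mem_inter x).and (mem_inter 0)).exists
    have im_add : (f ↑(r • e + x)).im = 0 := (Complex.nonneg_iff.1 (hf _ hx.1 hx.2)).2.symm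
    have im_unit : (f ↑(r • e + 0)).im = 0 := (Complex.nonneg_iff.1 (hf _ h0.1 h0.2)).2.symm
    refine Complex.ext rfl ?_
    simpa [im_unit] using im_add.trans im_unit.symm
  have cones_generate : ∀ y, ∃ c₁ ∈ C₁, ∃ c₂ ∈ C₂, c₁ - c₂ = y := by
    intro y
    obtain ⟨r, hy, h0⟩ := ((he₁ y).and (he₂ 0)).exists
    exact ⟨_, hy, _, h0, by abel⟩
  obtain ⟨h₁, h₂, h_add, h₁_nonneg, h₂_nonneg⟩ :=
    exists_add_eq_of_nonneg_inter C₁ C₂ cones_generate fRe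
      fun x hx₁ hx₂ => (Complex.nonneg_iff.1 (hf x hx₁ hx₂)).1
  obtain ⟨g₁, hg₁⟩ := exists_complexLinear_extension E hE h₁
  refine ⟨g₁, f - g₁, add_sub_cancel _ _, fun x hx => ?_, fun x hx => ?_⟩
  · rw [hg₁]
    exact_mod_cast h₁_nonneg x hx
  · have : (f - g₁) x = h₂ x := by
      rw [LinearMap.sub_apply, f_real, hg₁, ← h_add, LinearMap.add_apply]
      push_cast
      ring
    rw [this]
    exact_mod_cast h₂_nonneg x hx

end SplittingFunctionals

namespace IsPosElem

lemma zero {R : Type*} [Ring R] [StarRing R] : IsPosElem (0 : R) := ⟨0, by simp⟩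

lemma isSelfAdjoint {R : Type*} [Ring R] [StarRing R] {x : R} (hx : IsPosElem x) :
    IsSelfAdjoint x := by
  obtain ⟨b, rfl⟩ := hx
  exact IsSelfAdjoint.star_mul_self b

lemma smul {R : Type*} [Ring R] [StarRing R] [Algebra ℝ R] [StarModule ℝ R] {x : R}
    (hx : IsPosElem x) {r : ℝ} (hr : 0 ≤ r) : IsPosElem (r • x) := by
  obtain ⟨b, rfl⟩ := hx
  exact ⟨√r • b, by rw [star_smul, star_trivial √r, smul_mul_smul_comm, Real.mul_self_sqrt hr]⟩

lemma add {B : Type*} [CStarAlgebra B] {x y : B} (hx : IsPosElem x) (hy : IsPosElem y) :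
    IsPosElem (x + y) := by
  let _ := CStarAlgebra.spectralOrder B
  have := CStarAlgebra.spectralOrderedRing B
  rw [IsPosElem, ← CStarAlgebra.nonneg_iff_eq_star_mul_self] at *
  exact add_nonneg hx hy

end IsPosElem

lemma eventually_isPosElem_smul_one_add {B : Type*} [CStarAlgebra B] {x : B}
    (hx : IsSelfAdjoint x) : ∀ᶠ r : ℝ in atTop, IsPosElem (r • (1 : B) + x) := by
  let _ := CStarAlgebra.spectralOrder B
  have := CStarAlgebra.spectralOrderedRing B
  filter_upwards [eventually_ge_atTop ‖x‖] with r hr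
  rw [IsPosElem, ← CStarAlgebra.nonneg_iff_eq_star_mul_self, ← Algebra.algebraMap_eq_smul_one,
    ← neg_le_iff_add_nonneg']
  exact (neg_le_neg (algebraMap_mono B hr)).trans hx.neg_algebraMap_norm_le_self

section MatrixPositivity

variable {m n : Type*} [Fintype m] [Fintype n] [DecidableEq n]

variable (A n) in
/-- The C⋆-algebra structure on `Mₙ(A)`, for `A` with the unbundled instances of a C⋆-algebra. It
lives on `CStarMatrix n n A`, whose underlying star algebra is `Matrix n n A`. -/
noncomputable abbrev matrixCStarAlgebra : CStarAlgebra (CStarMatrix n n A) :=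
  let _ : CStarAlgebra A := {}
  let _ := CStarAlgebra.spectralOrder A
  have := CStarAlgebra.spectralOrderedRing A
  inferInstance

variable (A n) in
/-- The cone of positive elements of `Mₙ(A)`, with `IsPosElem` as the notion of positivity. -/
def matrixPosElemCone : PointedCone ℝ (Matrix n n A) where
  carrier := {x | IsPosElem x}
  zero_mem' := .zero
  add_mem' := let _ := matrixCStarAlgebra A n; IsPosElem.add (B := CStarMatrix n n A)
  smul_mem' r _ hx := hx.smul r.2

lemma eventually_mem_matrixPosElemCone {x : Matrix n n A} (hx : IsSelfAdjoint x) :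
    ∀ᶠ r : ℝ in atTop, r • (1 : Matrix n n A) + x ∈ matrixPosElemCone A n :=
  let _ := matrixCStarAlgebra A n
  eventually_isPosElem_smul_one_add (B := CStarMatrix n n A) hx

lemma isPosElem_conjTranspose_mul_self (V : Matrix m n A) : IsPosElem (Vᴴ * V) := by
  cases isEmpty_or_nonempty n with
  | inl _ => exact ⟨0, Subsingleton.elim _ _⟩
  | inr hn =>
    obtain ⟨i₀⟩ := hn
    -- A row of `V` placed in an otherwise zero square matrix has the same Gram matrix, so `Vᴴ * V`
    -- becomes a sum of positive elements of `Mₙ(A)`.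
    let rowBlock (k : m) : Matrix n n A := Matrix.updateRow 0 i₀ (V k)
    have sum_rowBlock : Vᴴ * V = ∑ k, star (rowBlock k) * rowBlock k := by
      ext i j
      simp [rowBlock, Matrix.mul_apply, Matrix.sum_apply, Matrix.star_apply,
        Matrix.updateRow_apply, apply_ite star]
    rw [sum_rowBlock]
    exact Submodule.sum_mem (matrixPosElemCone A n) fun k _ => ⟨rowBlock k, rfl⟩

end MatrixPositivity

section MatrixDuality

variable {R V m n : Type*} [CommSemiring R] [AddCommMonoid V] [Module R V]
  [Fintype m] [Fintype n]

/-- The duality between maps `V → Mₙ(R)` and functionals on `Mₙ(V)`, sending `φ` to the functional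
`s_φ` given by the formula of `dualFunc`. -/
def matrixDualEquiv [DecidableEq n] : (V →ₗ[R] Matrix n n R) ≃ₗ[R] (Matrix n n V →ₗ[R] R) where
  toFun φ :=
    { toFun x := ∑ i, ∑ j, φ (x i j) i j
      map_add' x y := by simp [Finset.sum_add_distrib]
      map_smul' c x := by simp [Finset.mul_sum] }
  invFun G :=
    { toFun x := Matrix.of fun i j => G (Matrix.single i j x)
      map_add' x y := by ext; simp [Matrix.single_add]
      map_smul' c x := by ext; simp [← Matrix.smul_single] }
  map_add' φ ψ := by ext; simp [Finset.sum_add_distrib]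
  map_smul' c φ := by ext; simp [Finset.mul_sum]
  left_inv φ := by
    ext x i j
    have entry (k l) :
        φ (Matrix.single i j x k l) k l = if i = k then if j = l then φ x i j else 0 else 0 := by
      rw [Matrix.single_apply]
      split_ifs <;> simp_all
    simp [entry]
  right_inv G := by
    ext x
    simp only [LinearMap.coe_mk, AddHom.coe_mk, Matrix.of_apply, ← map_sum,
      ← Matrix.matrix_eq_sum_single]

variable [StarRing R]

/-- The compression `v⋆ s v` of a matrix `s` over a module by a rectangular scalar matrix `v`,
written entrywise because the entries of `s` and `v` lie in different types. -/
def scalarCompression (v : Matrix m n R) (s : Matrix m m V) : Matrix n n V :=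
  Matrix.of fun i j => ∑ k, ∑ l, (star (v k i) * v l j) • s k l

lemma scalarCompression_one [DecidableEq m] (s : Matrix m m V) :
    scalarCompression (1 : Matrix m m R) s = s := by
  ext i j
  simp [scalarCompression, Matrix.one_apply, apply_ite star, ite_smul]

lemma star_dotProduct_comp_map_mulVec [DecidableEq n] (ψ : V →ₗ[R] Matrix n n R)
    (s : Matrix m m V) (v : m × n → R) :
    star v ⬝ᵥ (Matrix.comp m m n n R (s.map ψ) *ᵥ v) =
      matrixDualEquiv ψ (scalarCompression (Matrix.of (Function.curry v)) s) := by
  calc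
    _ = ∑ k, ∑ i, ∑ l, ∑ j, star (v (k, i)) * v (l, j) * ψ (s k l) i j := by
      simp only [dotProduct, mulVec, Fintype.sum_prod_type, Finset.mul_sum, Pi.star_apply,
        Matrix.comp_apply, Matrix.map_apply, mul_assoc, mul_comm (ψ _ _ _)]
    _ = ∑ i, ∑ j, ∑ k, ∑ l, star (v (k, i)) * v (l, j) * ψ (s k l) i j := by
      rw [Finset.sum_comm]
      exact Finset.sum_congr rfl fun i _ =>
        (Finset.sum_congr rfl fun k _ => Finset.sum_comm).trans Finset.sum_comm
    _ = _ := by simp [matrixDualEquiv, scalarCompression, Matrix.sum_apply]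

end MatrixDuality

section BlockMatrices

lemma posSemidef_of_forall_nonneg {ι : Type*} [Fintype ι] {M : Matrix ι ι ℂ}
    (hM : ∀ v : ι → ℂ, 0 ≤ star v ⬝ᵥ (M *ᵥ v)) : M.PosSemidef := by
  classical
  rw [← Matrix.isPositive_toEuclideanLin_iff, LinearMap.isPositive_iff_complex]
  intro x
  have inner_nonneg : 0 ≤ inner ℂ (M.toEuclideanLin x) x := by
    rw [← inner_conj_symm, EuclideanSpace.inner_eq_star_dotProduct, dotProduct_comm]
    exact star_nonneg_iff.2 (hM x.ofLp)
  obtain ⟨re_nonneg, im_eq_zero⟩ := Complex.nonneg_iff.1 inner_nonneg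
  exact ⟨Complex.ext rfl im_eq_zero, re_nonneg⟩

open scoped MatrixOrder Matrix.Norms.L2Operator in
lemma isPosElem_iff_posSemidef {ι : Type*} [Fintype ι] [DecidableEq ι] {M : Matrix ι ι ℂ} :
    IsPosElem M ↔ M.PosSemidef := by
  rw [IsPosElem, ← CStarAlgebra.nonneg_iff_eq_star_mul_self, Matrix.nonneg_iff_posSemidef]

lemma isPosElem_iff_comp_posSemidef {m n : Type*} [Fintype m] [Fintype n] [DecidableEq m]
    [DecidableEq n] {P : Matrix m m (Matrix n n ℂ)} :
    IsPosElem P ↔ (Matrix.comp m m n n ℂ P).PosSemidef := by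
  rw [← isPosElem_iff_posSemidef]
  refine (Matrix.compRingEquiv m n ℂ).toEquiv.exists_congr fun b => ?_
  rw [← (Matrix.compRingEquiv m n ℂ).injective.eq_iff, map_mul]
  rfl

end BlockMatrices

section CompletePositivity

lemma matCoe_scalarCompression {B : Type*} [NormedRing B] [StarRing B] [NormedAlgebra ℂ B]
    [StarModule ℂ B] {S : Submodule ℂ B} {m n : ℕ} (v : Matrix (Fin m) (Fin n) ℂ)
    (s : Matrix (Fin m) (Fin m) S) :
    matCoe (scalarCompression v s) =
      (v.map (algebraMap ℂ B))ᴴ * (matCoe s * v.map (algebraMap ℂ B)) := by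
  ext i j
  simp only [matCoe, scalarCompression, Matrix.of_apply, Matrix.mul_apply, Matrix.map_apply,
    Matrix.conjTranspose_apply, Submodule.coe_sum, Submodule.coe_smul, Finset.mul_sum,
    ← algebraMap_star_comm, ← Algebra.commutes, ← Algebra.smul_def, smul_smul]

variable {S : Submodule ℂ A} {m n : ℕ}

lemma isPosElem_matCoe_scalarCompression (v : Matrix (Fin m) (Fin n) ℂ)
    {s : Matrix (Fin m) (Fin m) S} (hs : IsPosElem (matCoe s)) :
    IsPosElem (matCoe (scalarCompression v s)) := by
  obtain ⟨b, hb⟩ := hs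
  have : matCoe (scalarCompression v s) =
      (b * v.map (algebraMap ℂ A))ᴴ * (b * v.map (algebraMap ℂ A)) := by
    simp only [matCoe_scalarCompression, hb, star_eq_conjTranspose, conjTranspose_mul,
      Matrix.mul_assoc]
  exact this ▸ isPosElem_conjTranspose_mul_self _

theorem isCPMap_iff_dualFunc_nonneg {ψ : S →ₗ[ℂ] Matrix (Fin n) (Fin n) ℂ} :
    IsCPMap ψ ↔ ∀ s : Matrix (Fin n) (Fin n) S, IsPosElem (matCoe s) → 0 ≤ dualFunc ψ s := by
  constructor
  · intro hψ s hs
    let v : Fin n × Fin n → ℂ := fun p => (1 : Matrix (Fin n) (Fin n) ℂ) p.1 p.2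
    have of_curry_v : Matrix.of (Function.curry v) = 1 := rfl
    have nonneg_v := (isPosElem_iff_comp_posSemidef.1 (hψ n s hs)).dotProduct_mulVec_nonneg v
    rwa [star_dotProduct_comp_map_mulVec, of_curry_v, scalarCompression_one] at nonneg_v
  · intro hψ m s hs
    refine isPosElem_iff_comp_posSemidef.2 (posSemidef_of_forall_nonneg fun v => ?_)
    rw [star_dotProduct_comp_map_mulVec]
    exact hψ _ (isPosElem_matCoe_scalarCompression _ hs)

theorem isCoCPMap_iff_dualFunc_nonneg {η : S →ₗ[ℂ] Matrix (Fin n) (Fin n) ℂ} :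
    IsCoCPMap η ↔ ∀ s : Matrix (Fin n) (Fin n) S, IsPosElem (matCoe s)ᵀ → 0 ≤ dualFunc η s := by
  let ηt := (Matrix.transposeLinearEquiv (Fin n) (Fin n) ℂ ℂ).toLinearMap ∘ₗ η
  have dualFunc_transpose : ∀ s, dualFunc ηt sᵀ = dualFunc η s := fun s => Finset.sum_comm
  calc
    IsCoCPMap η ↔ IsCPMap ηt := Iff.rfl
    _ ↔ ∀ s, IsPosElem (matCoe s) → 0 ≤ dualFunc ηt s := isCPMap_iff_dualFunc_nonneg
    _ ↔ ∀ s, IsPosElem (matCoe s)ᵀ → 0 ≤ dualFunc η s := by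
      refine (Matrix.transposeLinearEquiv (Fin n) (Fin n) ℂ S).toEquiv.forall_congr fun s => ?_
      rw [← dualFunc_transpose]
      rfl

end CompletePositivity

section Decomposition

variable {S : Submodule ℂ A} {n : ℕ}

variable (S n) in
/-- The real space of matrices over `S` that are self-adjoint in `Mₙ(A)`. It is the ambient space of
the cones defining `Jₙ(S)`. -/
noncomputable def selfAdjointMatrices : Submodule ℝ (Matrix (Fin n) (Fin n) S) :=
  (selfAdjoint.submodule ℝ (Matrix (Fin n) (Fin n) A)).comap
    (S.subtype.mapMatrix.restrictScalars ℝ)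

lemma eq_zero_of_isSelfAdjoint_I_smul {F : Type*} [AddCommGroup F] [StarAddMonoid F] [Module ℂ F]
    [StarModule ℂ F] {x : F} (hx : IsSelfAdjoint x) (hIx : IsSelfAdjoint (Complex.I • x)) :
    x = 0 := by
  have hIx_zero : Complex.I • x = 0 := by
    rw [← hIx.coe_realPart, realPart_I_smul, hx.imaginaryPart, neg_zero, ZeroMemClass.coe_zero]
  simpa using hIx_zero

theorem exists_add_eq_of_nonneg_on_memJ (h_one : (1 : A) ∈ S)
    (f : Matrix (Fin n) (Fin n) S →ₗ[ℂ] ℂ) (hf : ∀ s, memJ s → 0 ≤ f s) :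
    ∃ g₁ g₂ : Matrix (Fin n) (Fin n) S →ₗ[ℂ] ℂ, g₁ + g₂ = f ∧
      (∀ s, IsPosElem (matCoe s) → 0 ≤ g₁ s) ∧ ∀ s, IsPosElem (matCoe s)ᵀ → 0 ≤ g₂ s := by
  let E := selfAdjointMatrices S n
  let ι : E →ₗ[ℝ] Matrix (Fin n) (Fin n) A :=
    S.subtype.mapMatrix.restrictScalars ℝ ∘ₗ E.subtype
  let τ := (Matrix.transposeLinearEquiv (Fin n) (Fin n) ℝ A).toLinearMap
  let C := matrixPosElemCone A (Fin n)
  have matCoe_injective : Function.Injective (matCoe : Matrix (Fin n) (Fin n) S → _) :=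
    Matrix.map_injective Subtype.val_injective
  let unit : Matrix (Fin n) (Fin n) S := Matrix.diagonal fun _ => ⟨1, h_one⟩
  have matCoe_unit : matCoe unit = 1 := Matrix.diagonal_map rfl
  have unit_mem : IsSelfAdjoint (matCoe unit) := matCoe_unit ▸ .one _
  let e : E := ⟨unit, unit_mem⟩
  have ι_e : ι e = 1 := matCoe_unit
  have hE : ∀ x ∈ E, Complex.I • x ∈ E → x = 0 := fun x hx hIx =>
    matCoe_injective (eq_zero_of_isSelfAdjoint_I_smul (x := matCoe x) hx hIx)
  obtain ⟨g₁, g₂, hg, hg₁, hg₂⟩ := exists_add_eq_of_nonneg_inter_complex E hE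
    (C.comap ι) (C.comap (τ ∘ₗ ι)) e
    (fun x => by
      simpa [ι_e] using eventually_mem_matrixPosElemCone (x := ι x) x.2)
    (fun x => by
      simpa [ι_e, τ] using eventually_mem_matrixPosElemCone (x := (ι x)ᵀ)
        (Matrix.IsHermitian.transpose x.2))
    f (fun x hx₁ hx₂ => hf x ⟨hx₁, hx₂⟩)
  exact ⟨g₁, g₂, hg, fun s hs => hg₁ ⟨s, hs.isSelfAdjoint⟩ hs,
    fun s hs => hg₂ ⟨s, Matrix.isHermitian_transpose_iff.1 hs.isSelfAdjoint⟩ hs⟩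

end Decomposition

theorem decomposable_iff_dualFunc_nonneg_on_J_general (S : Submodule ℂ A) (h_one : (1 : A) ∈ S)
    (n : ℕ) (φ : S →ₗ[ℂ] Matrix (Fin n) (Fin n) ℂ) :
    IsDecomposable φ ↔
      (∀ s : Matrix (Fin n) (Fin n) S, memJ s → 0 ≤ dualFunc φ s) := by
  constructor
  · rintro ⟨ψ, η, hψ, hη, rfl⟩ s ⟨hs, hst⟩
    have dualFunc_add : dualFunc (ψ + η) s = dualFunc ψ s + dualFunc η s :=
      DFunLike.congr_fun (map_add matrixDualEquiv ψ η) s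
    rw [dualFunc_add]
    exact add_nonneg (isCPMap_iff_dualFunc_nonneg.1 hψ s hs)
      (isCoCPMap_iff_dualFunc_nonneg.1 hη s hst)
  · intro hφ
    obtain ⟨g₁, g₂, hg, hg₁, hg₂⟩ := exists_add_eq_of_nonneg_on_memJ h_one (matrixDualEquiv φ) hφ
    obtain ⟨ψ, rfl⟩ := matrixDualEquiv.surjective g₁
    obtain ⟨η, rfl⟩ := matrixDualEquiv.surjective g₂
    refine ⟨ψ, η, isCPMap_iff_dualFunc_nonneg.2 hg₁, isCoCPMap_iff_dualFunc_nonneg.2 hg₂, ?_⟩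
    exact matrixDualEquiv.injective ((map_add _ _ _).trans hg).symm

/-- `φ` is decomposable iff its dual functional is nonnegative on `Jₙ(S)`. -/
theorem decomposable_iff_dualFunc_nonneg_on_J
    (S : Submodule ℂ A) (h_one : (1 : A) ∈ S) (h_star : ∀ a ∈ S, star a ∈ S)
    (n : ℕ) (φ : S →ₗ[ℂ] Matrix (Fin n) (Fin n) ℂ) :
    IsDecomposable φ ↔
      (∀ s : Matrix (Fin n) (Fin n) S, memJ s → 0 ≤ dualFunc φ s) :=
  decomposable_iff_dualFunc_nonneg_on_J_general S h_one n φ
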